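/- Let f : ℝ² → ℝ² be a C^∞ map with f(0)=0 which has corank one at 0, let λ be its Jacobian determinant, and let η be any null vector field for f. Then j⁴f(0) is A⁴-equivalent to the 4-jet at 0 of (x,y) ↦ (x, x³y + αx²y² + y⁴) for some α ∈ ℝ, or to the 4-jet at 0 of (x,y) ↦ (x, αx²y² + y⁴) for some α ∈ ℝ, if and only if dλ(0) = 0, the Hessian matrix H_λ(0) is the zero matrix, and (η³λ)(0) ≠ 0. -/

import Mathlib

open Filter Topology

noncomputable section

/-- Directional derivative of a scalar function. -/
def dop (v : ℝ × ℝ) (g : ℝ × ℝ → ℝ) : ℝ × ℝ → ℝ :=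
  fun p => fderiv ℝ g p v

/-- Partial derivative operator in the first coordinate. -/
def pdx : (ℝ × ℝ → ℝ) → ℝ × ℝ → ℝ := dop (1, 0)

/-- Partial derivative operator in the second coordinate. -/
def pdy : (ℝ × ℝ → ℝ) → ℝ × ℝ → ℝ := dop (0, 1)

/-- Taylor coefficient `a_{ij} = ∂_x^i ∂_y^j g(0,0) / (i! j!)` of `g` at the origin. -/
def tcoeff (g : ℝ × ℝ → ℝ) (i j : ℕ) : ℝ :=
  (pdx^[i] (pdy^[j] g)) 0 / (Nat.factorial i * Nat.factorial j)

/-- The Jacobian determinant `λ_f` of a map `f : ℝ² → ℝ²`. -/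
def jacDet (f : ℝ × ℝ → ℝ × ℝ) (p : ℝ × ℝ) : ℝ :=
  (fderiv ℝ f p (1, 0)).1 * (fderiv ℝ f p (0, 1)).2 -
    (fderiv ℝ f p (1, 0)).2 * (fderiv ℝ f p (0, 1)).1

/-- `f` has corank one at `0` : the derivative of `f` at `0` has rank one. -/
def CorankOne (f : ℝ × ℝ → ℝ × ℝ) : Prop :=
  LinearMap.rank ((fderiv ℝ f 0).toLinearMap) = 1

/-- `η` is a null vector field for `f` near `0`. -/
def IsNullVF (f η : ℝ × ℝ → ℝ × ℝ) : Prop :=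
  η 0 ≠ 0 ∧ ∃ U ∈ 𝓝 (0 : ℝ × ℝ),
    ContDiffOn ℝ (⊤ : ℕ∞) η U ∧ ∀ p ∈ U, jacDet f p = 0 → fderiv ℝ f p (η p) = 0

/-- The derivative `(ηg)(p) = Dg(p)(η(p))` of `g` along the vector field `η`. -/
def etaD (η : ℝ × ℝ → ℝ × ℝ) (g : ℝ × ℝ → ℝ) : ℝ × ℝ → ℝ :=
  fun p => fderiv ℝ g p (η p)

/-- The iterated derivative `η^k g` along the vector field `η`. -/
def etaIter (η : ℝ × ℝ → ℝ × ℝ) : ℕ → (ℝ × ℝ → ℝ) → ℝ × ℝ → ℝ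
  | 0, g => g
  | k + 1, g => etaD η (etaIter η k g)

/-- The Hessian matrix of second partial derivatives of `g` at `0`. -/
def hess (g : ℝ × ℝ → ℝ) : Matrix (Fin 2) (Fin 2) ℝ :=
  !![pdx (pdx g) 0, pdx (pdy g) 0; pdy (pdx g) 0, pdy (pdy g) 0]

/-- `A^r`-equivalence of the `r`-jets at `0` of two map-germs `(ℝ²,0) → (ℝ²,0)`. -/
def JetEquiv (r : ℕ) (f g : ℝ × ℝ → ℝ × ℝ) : Prop :=
  ∃ φ ψ : ℝ × ℝ → ℝ × ℝ,
    ContDiff ℝ (⊤ : ℕ∞) φ ∧ ContDiff ℝ (⊤ : ℕ∞) ψ ∧ φ 0 = 0 ∧ ψ 0 = 0 ∧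
    Function.Bijective (⇑(fderiv ℝ φ 0)) ∧ Function.Bijective (⇑(fderiv ℝ ψ 0)) ∧
    ∀ i ≤ r, iteratedFDeriv ℝ i (ψ ∘ f ∘ φ) 0 = iteratedFDeriv ℝ i g 0

/-- `A`-equivalence of two map-germs `(ℝ²,0) → (ℝ²,0)`. -/
def AEquiv (f g : ℝ × ℝ → ℝ × ℝ) : Prop :=
  ∃ φ ψ : ℝ × ℝ → ℝ × ℝ,
    ContDiff ℝ (⊤ : ℕ∞) φ ∧ ContDiff ℝ (⊤ : ℕ∞) ψ ∧ φ 0 = 0 ∧ ψ 0 = 0 ∧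
    Function.Bijective (⇑(fderiv ℝ φ 0)) ∧ Function.Bijective (⇑(fderiv ℝ ψ 0)) ∧
    ∀ᶠ p in 𝓝 (0 : ℝ × ℝ), ψ (f (φ p)) = g p

/-- `f` has the form `(x, g(x,y))` where `g` is `C^∞` and the Taylor coefficients of `g`
of total degree `< N` at the origin are prescribed by `P`. -/
def HasForm (f : ℝ × ℝ → ℝ × ℝ) (g : ℝ × ℝ → ℝ) (N : ℕ) (P : ℕ → ℕ → ℝ) : Prop :=
  ContDiff ℝ (⊤ : ℕ∞) g ∧ (∀ p, f p = (p.1, g p)) ∧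
    ∀ i j, i + j < N → tcoeff g i j = P i j

/-- Smooth functions. -/
abbrev Sm (g : ℝ × ℝ → ℝ) : Prop := ContDiff ℝ (⊤ : ℕ∞) g

/-- Smooth maps. -/
abbrev SmM (g : ℝ × ℝ → ℝ × ℝ) : Prop := ContDiff ℝ (⊤ : ℕ∞) g

lemma Sm.diff {g : ℝ × ℝ → ℝ} (h : Sm g) : Differentiable ℝ g :=
  ContDiff.differentiable h (by simp)

lemma SmM.diff {g : ℝ × ℝ → ℝ × ℝ} (h : SmM g) : Differentiable ℝ g :=
  ContDiff.differentiable h (by simp)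

lemma SmM.fst {g : ℝ × ℝ → ℝ × ℝ} (h : SmM g) : Sm (fun p => (g p).1) :=
  contDiff_fst.comp h

lemma SmM.snd {g : ℝ × ℝ → ℝ × ℝ} (h : SmM g) : Sm (fun p => (g p).2) :=
  contDiff_snd.comp h

lemma Sm.dop {g : ℝ × ℝ → ℝ} (h : Sm g) (v : ℝ × ℝ) : Sm (dop v g) := by
  have h1 : ContDiff ℝ (⊤ : ℕ∞) (fderiv ℝ g) := ContDiff.fderiv_right h (by simp)
  exact h1.clm_apply contDiff_const

lemma Sm.etaD {g : ℝ × ℝ → ℝ} (h : Sm g) {ξ : ℝ × ℝ → ℝ × ℝ} (hξ : SmM ξ) :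
    Sm (etaD ξ g) := by
  have h1 : ContDiff ℝ (⊤ : ℕ∞) (fderiv ℝ g) := ContDiff.fderiv_right h (by simp)
  exact h1.clm_apply hξ

lemma SmM.dop {g : ℝ × ℝ → ℝ × ℝ} (h : SmM g) (v : ℝ × ℝ) :
    SmM (fun p => fderiv ℝ g p v) := by
  have h1 : ContDiff ℝ (⊤ : ℕ∞) (fderiv ℝ g) := ContDiff.fderiv_right h (by simp)
  exact h1.clm_apply contDiff_const

lemma dop_add {g h : ℝ × ℝ → ℝ} (hg : Sm g) (hh : Sm h) (v : ℝ × ℝ) :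
    dop v (fun p => g p + h p) = fun p => dop v g p + dop v h p := by
  funext p
  simp only [dop]
  rw [fderiv_fun_add (hg.diff p) (hh.diff p)]; rfl

lemma dop_sub {g h : ℝ × ℝ → ℝ} (hg : Sm g) (hh : Sm h) (v : ℝ × ℝ) :
    dop v (fun p => g p - h p) = fun p => dop v g p - dop v h p := by
  funext p
  simp only [dop]
  rw [fderiv_fun_sub (hg.diff p) (hh.diff p)]; rfl

lemma dop_mul {g h : ℝ × ℝ → ℝ} (hg : Sm g) (hh : Sm h) (v : ℝ × ℝ) :
    dop v (fun p => g p * h p) = fun p => dop v g p * h p + g p * dop v h p := by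
  funext p
  simp only [dop]
  rw [fderiv_fun_mul (hg.diff p) (hh.diff p)]
  simp; ring

lemma dop_cmul {h : ℝ × ℝ → ℝ} (c : ℝ) (hh : Sm h) (v : ℝ × ℝ) :
    dop v (fun p => c * h p) = fun p => c * dop v h p := by
  funext p
  simp only [dop]
  rw [fderiv_const_mul (hh.diff p)]
  simp

lemma dop_zero (v : ℝ × ℝ) : dop v (fun _ => 0) = fun _ => 0 := by
  funext p; simp [dop]

lemma fderiv_split {E : Type*} [NormedAddCommGroup E] [NormedSpace ℝ E]
    (L : (ℝ × ℝ) →L[ℝ] E) (v : ℝ × ℝ) :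
    L v = v.1 • L (1, 0) + v.2 • L (0, 1) := by
  rw [← map_smul, ← map_smul, ← map_add]; congr 1; ext <;> simp

lemma dop_split (v : ℝ × ℝ) (g : ℝ × ℝ → ℝ) (p : ℝ × ℝ) :
    dop v g p = v.1 * pdx g p + v.2 * pdy g p :=
  fderiv_split (fderiv ℝ g p) v

lemma dop_comp {g : ℝ × ℝ → ℝ} {φ : ℝ × ℝ → ℝ × ℝ} (hg : Sm g) (hφ : SmM φ) (v : ℝ × ℝ)
    (p : ℝ × ℝ) :
    dop v (fun q => g (φ q)) p = fderiv ℝ g (φ p) (fderiv ℝ φ p v) := by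
  simp only [dop]
  have := fderiv_fun_comp p (hg.diff (φ p)) (hφ.diff p)
  rw [this]; rfl

lemma dop_fst {φ : ℝ × ℝ → ℝ × ℝ} (hφ : SmM φ) (v p : ℝ × ℝ) :
    dop v (fun q => (φ q).1) p = (fderiv ℝ φ p v).1 := by
  simp only [dop]
  rw [fderiv.fst (hφ.diff p)]; rfl

lemma dop_snd {φ : ℝ × ℝ → ℝ × ℝ} (hφ : SmM φ) (v p : ℝ × ℝ) :
    dop v (fun q => (φ q).2) p = (fderiv ℝ φ p v).2 := by
  simp only [dop]
  rw [fderiv.snd (hφ.diff p)]; rfl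

lemma dop_comm {g : ℝ × ℝ → ℝ} (hg : Sm g) (v w : ℝ × ℝ) :
    dop v (dop w g) = dop w (dop v g) := by
  funext p
  have h1 : ContDiff ℝ (⊤ : ℕ∞) (fderiv ℝ g) := ContDiff.fderiv_right hg (by simp)
  have h2 : IsSymmSndFDerivAt ℝ g p :=
    ContDiffAt.isSymmSndFDerivAt (n := (⊤ : ℕ∞)) hg.contDiffAt
      (by
        simp only [minSmoothness_of_isRCLikeNormedField]
        exact WithTop.coe_le_coe.2 (le_top : (2 : ℕ∞) ≤ ⊤))
  have key : ∀ v w, dop v (dop w g) p = fderiv ℝ (fderiv ℝ g) p v w := by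
    intro v w
    simp only [dop]
    have h3 : DifferentiableAt ℝ (fderiv ℝ g) p := h1.differentiable (by simp) p
    have h4 := fderiv_clm_apply h3 (differentiableAt_const w)
    change fderiv ℝ (fun y => (fderiv ℝ g y) w) p v = _
    rw [h4]
    simp
  rw [key, key]; exact h2 v w

/-- `g` vanishes to order `k` at the origin: all derivatives of order `< k` are zero. -/
def Zf : ℕ → (ℝ × ℝ → ℝ) → Prop
  | 0, _ => True
  | k + 1, g => g 0 = 0 ∧ ∀ v, Zf k (dop v g)

lemma Zf_zero_fun (k : ℕ) : Zf k (fun _ => 0) := by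
  induction k with
  | zero => trivial
  | succ k ih => exact ⟨rfl, fun v => by rw [dop_zero]; exact ih⟩

lemma Zf_congr {k : ℕ} {g h : ℝ × ℝ → ℝ} (e : g =ᶠ[𝓝 0] h) (hg : Zf k g) : Zf k h := by
  induction k generalizing g h with
  | zero => trivial
  | succ k ih =>
    refine ⟨e.eq_of_nhds ▸ hg.1, fun v => ih ?_ (hg.2 v)⟩
    filter_upwards [e.fderiv (𝕜 := ℝ)] with p hp
    simp only [dop, hp]

lemma Zf_mono {k : ℕ} {g : ℝ × ℝ → ℝ} (hg : Zf (k + 1) g) : Zf k g := by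
  induction k generalizing g with
  | zero => trivial
  | succ k ih => exact ⟨hg.1, fun v => ih (hg.2 v)⟩

lemma Zf_le {k l : ℕ} (hkl : k ≤ l) {g : ℝ × ℝ → ℝ} (hg : Zf l g) : Zf k g := by
  induction hkl with
  | refl => exact hg
  | step _ ih => exact ih (Zf_mono hg)

lemma Zf_add {k : ℕ} {g h : ℝ × ℝ → ℝ} (sg : Sm g) (sh : Sm h) (hg : Zf k g) (hh : Zf k h) :
    Zf k (fun p => g p + h p) := by
  induction k generalizing g h with
  | zero => trivial
  | succ k ih =>
    refine ⟨by simp [hg.1, hh.1], fun v => ?_⟩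
    rw [dop_add sg sh]
    exact ih (sg.dop v) (sh.dop v) (hg.2 v) (hh.2 v)

lemma Zf_sub {k : ℕ} {g h : ℝ × ℝ → ℝ} (sg : Sm g) (sh : Sm h) (hg : Zf k g) (hh : Zf k h) :
    Zf k (fun p => g p - h p) := by
  induction k generalizing g h with
  | zero => trivial
  | succ k ih =>
    refine ⟨by simp [hg.1, hh.1], fun v => ?_⟩
    rw [dop_sub sg sh]
    exact ih (sg.dop v) (sh.dop v) (hg.2 v) (hh.2 v)

lemma Zf_mul {k l : ℕ} {g h : ℝ × ℝ → ℝ} (sg : Sm g) (sh : Sm h) (hg : Zf k g) (hh : Zf l h) :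
    Zf (k + l) (fun p => g p * h p) := by
  obtain ⟨n, hn⟩ : ∃ n, n = k + l := ⟨_, rfl⟩
  rw [← hn]
  induction n generalizing k l g h with
  | zero => trivial
  | succ n ih =>
    refine ⟨?_, fun v => ?_⟩
    · rcases k with _ | k
      · rcases l with _ | l
        · omega
        · simp [hh.1]
      · simp [hg.1]
    · rw [dop_mul sg sh]
      refine Zf_add ((sg.dop v).mul sh) (sg.mul (sh.dop v)) ?_ ?_
      · rcases k with _ | k
        · exact Zf_le (by omega) (ih (k := 0) (l := n) (sg.dop v) sh trivial
            (Zf_le (by omega) hh) (by omega))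
        · exact ih (k := k) (l := l) (sg.dop v) sh (hg.2 v) hh (by omega)
      · rcases l with _ | l
        · exact ih (k := n) (l := 0) sg (sh.dop v) (Zf_le (by omega) hg) trivial (by omega)
        · exact ih (k := k) (l := l) sg (sh.dop v) hg (hh.2 v) (by omega)

lemma Zf_mul_left {k : ℕ} {g h : ℝ × ℝ → ℝ} (sg : Sm g) (sh : Sm h) (hh : Zf k h) :
    Zf k (fun p => g p * h p) := by
  have := Zf_mul (k := 0) sg sh trivial hh
  rwa [Nat.zero_add] at this

lemma Zf_mul_right {k : ℕ} {g h : ℝ × ℝ → ℝ} (sg : Sm g) (sh : Sm h) (hh : Zf k g) :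
    Zf k (fun p => g p * h p) :=
  Zf_mul (l := 0) sg sh hh trivial

lemma Zf_succ_iff {k : ℕ} {g : ℝ × ℝ → ℝ} (sg : Sm g) :
    Zf (k + 1) g ↔ g 0 = 0 ∧ Zf k (pdx g) ∧ Zf k (pdy g) := by
  constructor
  · exact fun h => ⟨h.1, h.2 _, h.2 _⟩
  · rintro ⟨h0, h1, h2⟩
    refine ⟨h0, fun v => ?_⟩
    have : dop v g = fun p => v.1 * pdx g p + v.2 * pdy g p := funext (dop_split v g)
    rw [this]
    exact Zf_add (contDiff_const.mul (sg.dop _)) (contDiff_const.mul (sg.dop _))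
      (Zf_mul_left contDiff_const (sg.dop _) h1) (Zf_mul_left contDiff_const (sg.dop _) h2)

lemma Zf_cancel {k : ℕ} {u h : ℝ × ℝ → ℝ} (su : Sm u) (sh : Sm h) (hu : u 0 ≠ 0)
    (H : Zf k (fun p => u p * h p)) : Zf k h := by
  induction k generalizing h with
  | zero => trivial
  | succ k ih =>
    have h1 : Zf k h := ih sh (Zf_mono H)
    refine ⟨by simpa [hu] using H.1, fun v => ih (sh.dop v) ?_⟩
    have h2 := H.2 v
    rw [dop_mul su sh] at h2
    have h3 := Zf_sub (((su.dop v).mul sh).add (su.mul (sh.dop v))) ((su.dop v).mul sh) h2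
      (Zf_mul_left (su.dop v) sh h1)
    simpa using h3

lemma dop_comp_split {g : ℝ × ℝ → ℝ} {φ : ℝ × ℝ → ℝ × ℝ} (hg : Sm g) (hφ : SmM φ) (v : ℝ × ℝ) :
    dop v (fun q => g (φ q)) = fun p => (fderiv ℝ φ p v).1 * pdx g (φ p) +
      (fderiv ℝ φ p v).2 * pdy g (φ p) := by
  funext p
  rw [dop_comp hg hφ, fderiv_split]; rfl

lemma Zf_comp {k : ℕ} {g : ℝ × ℝ → ℝ} {φ : ℝ × ℝ → ℝ × ℝ} (sg : Sm g) (sφ : SmM φ)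
    (h0 : φ 0 = 0) (hg : Zf k g) : Zf k (fun p => g (φ p)) := by
  induction k generalizing g with
  | zero => trivial
  | succ k ih =>
    refine ⟨by simp [h0, hg.1], fun v => ?_⟩
    rw [dop_comp_split sg sφ]
    have s1 : Sm (fun p => pdx g (φ p)) := (sg.dop _).comp sφ
    have s2 : Sm (fun p => pdy g (φ p)) := (sg.dop _).comp sφ
    exact Zf_add ((sφ.dop v).fst.mul s1) ((sφ.dop v).snd.mul s2)
      (Zf_mul_left (sφ.dop v).fst s1 (ih (sg.dop _) (hg.2 _)))
      (Zf_mul_left (sφ.dop v).snd s2 (ih (sg.dop _) (hg.2 _)))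

lemma Sm_jacDet {f : ℝ × ℝ → ℝ × ℝ} (hf : SmM f) : Sm (jacDet f) :=
  ((hf.dop _).fst.mul (hf.dop _).snd).sub ((hf.dop _).snd.mul (hf.dop _).fst)

lemma Zf_comp_cancel {k : ℕ} {g : ℝ × ℝ → ℝ} {φ : ℝ × ℝ → ℝ × ℝ} (sg : Sm g) (sφ : SmM φ)
    (h0 : φ 0 = 0) (hd : jacDet φ 0 ≠ 0) (hg : Zf k (fun p => g (φ p))) : Zf k g := by
  induction k generalizing g with
  | zero => trivial
  | succ k ih =>
    have s0 : Sm (fun p => g (φ p)) := sg.comp sφ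
    have s1 : Sm (fun p => pdx g (φ p)) := (sg.dop _).comp sφ
    have s2 : Sm (fun p => pdy g (φ p)) := (sg.dop _).comp sφ
    have e1 := hg.2 (1, 0)
    have e2 := hg.2 (0, 1)
    rw [Zf_succ_iff sg]
    refine ⟨by simpa [h0] using hg.1, ih (sg.dop _) ?_, ih (sg.dop _) ?_⟩
    · refine Zf_cancel (Sm_jacDet sφ) s1 hd ?_
      have := Zf_sub (((sφ.dop (0, 1)).snd).mul (s0.dop (1, 0)))
        (((sφ.dop (1, 0)).snd).mul (s0.dop (0, 1)))
        (Zf_mul_left (sφ.dop (0, 1)).snd (s0.dop (1, 0)) e1)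
        (Zf_mul_left (sφ.dop (1, 0)).snd (s0.dop (0, 1)) e2)
      convert! this using 2 with p
      rw [dop_comp_split sg sφ, dop_comp_split sg sφ]
      simp only [jacDet]; ring
    · refine Zf_cancel (Sm_jacDet sφ) s2 hd ?_
      have := Zf_sub (((sφ.dop (1, 0)).fst).mul (s0.dop (0, 1)))
        (((sφ.dop (0, 1)).fst).mul (s0.dop (1, 0)))
        (Zf_mul_left (sφ.dop (1, 0)).fst (s0.dop (0, 1)) e2)
        (Zf_mul_left (sφ.dop (0, 1)).fst (s0.dop (1, 0)) e1)
      convert! this using 2 with p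
      rw [dop_comp_split sg sφ, dop_comp_split sg sφ]
      simp only [jacDet]; ring

lemma Zf_iff_iteratedFDeriv {k : ℕ} {g : ℝ × ℝ → ℝ} (sg : Sm g) :
    Zf (k + 1) g ↔ ∀ i ≤ k, iteratedFDeriv ℝ i g 0 = 0 := by
  have key : ∀ (i : ℕ) (g : ℝ × ℝ → ℝ), Sm g → ((iteratedFDeriv ℝ (i + 1) g 0 = 0) ↔
      ∀ v, iteratedFDeriv ℝ i (dop v g) 0 = 0) := by
    intro i g sg
    have h1 : ContDiff ℝ (⊤ : ℕ∞) (fderiv ℝ g) := ContDiff.fderiv_right sg (by simp)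
    have e : ∀ v (m : Fin i → ℝ × ℝ), iteratedFDeriv ℝ i (dop v g) 0 m =
        iteratedFDeriv ℝ i (fderiv ℝ g) 0 m v := by
      intro v m
      have := (ContinuousLinearMap.apply ℝ ℝ v).iteratedFDeriv_comp_left (x := 0) (i := i)
        (n := (⊤ : ℕ∞)) (f := fderiv ℝ g) h1.contDiffAt (by exact_mod_cast le_top)
      have h2 : dop v g = (ContinuousLinearMap.apply ℝ ℝ v) ∘ fderiv ℝ g := rfl
      rw [h2, this]; rfl
    constructor
    · intro H v
      ext m
      rw [e]
      have := congrArg (fun T => T (Fin.snoc m v)) H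
      simp only [iteratedFDeriv_succ_apply_right] at this
      simpa using this
    · intro H
      ext m
      rw [iteratedFDeriv_succ_apply_right, ← e, H]; rfl
  induction k generalizing g with
  | zero =>
    simp only [Zf, Nat.le_zero, forall_eq, implies_true, and_true]
    constructor
    · intro h; ext m; simp [h]
    · intro h
      have := congrArg (fun T => T 0) h
      simpa using this
  | succ k ih =>
    constructor
    · intro h i hi
      rcases i with _ | i
      · ext m; simp [h.1]
      · rw [key i g sg]
        intro v
        exact (ih (sg.dop v)).1 (h.2 v) i (by omega)
    · intro h
      refine ⟨?_, fun v => (ih (sg.dop v)).2 fun i hi => (key i g sg).1 (h _ (by omega)) v⟩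
      have := congrArg (fun T => T 0) (h 0 (by omega))
      simpa using this

lemma Sm_iter {g : ℝ × ℝ → ℝ} (sg : Sm g) (v : ℝ × ℝ) (n : ℕ) : Sm ((dop v)^[n] g) := by
  induction n generalizing g with
  | zero => exact sg
  | succ n ih => exact ih (sg.dop v)

lemma iter_zero {n : ℕ} {g : ℝ × ℝ → ℝ} (hg : Zf (n + 1) g) (v : ℝ × ℝ) :
    (dop v)^[n] g 0 = 0 := by
  induction n generalizing g with
  | zero => exact hg.1
  | succ n ih => exact ih (hg.2 v)

lemma iter_add {g h : ℝ × ℝ → ℝ} (sg : Sm g) (sh : Sm h) (v : ℝ × ℝ) (n : ℕ) :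
    (dop v)^[n] (fun p => g p + h p) = fun p => (dop v)^[n] g p + (dop v)^[n] h p := by
  induction n generalizing g h with
  | zero => rfl
  | succ n ih =>
    simp only [Function.iterate_succ_apply]
    rw [dop_add sg sh]
    exact ih (sg.dop v) (sh.dop v)

/-- The iterated derivative only depends on the function modulo higher order. -/
lemma iter_mod {n : ℕ} {g h : ℝ × ℝ → ℝ} (sg : Sm g) (sh : Sm h)
    (H : Zf (n + 1) (fun p => g p - h p)) (v : ℝ × ℝ) :
    (dop v)^[n] g 0 = (dop v)^[n] h 0 := by
  have h1 := iter_add (sg.sub sh) sh v n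
  have h2 : (fun p => g p - h p + h p) = g := by funext p; ring
  simp only [h2] at h1
  rw [h1]; simp only; rw [iter_zero H, zero_add]

lemma iter_mul {n : ℕ} {u h : ℝ × ℝ → ℝ} (su : Sm u) (sh : Sm h) (hh : Zf n h) (v : ℝ × ℝ) :
    (dop v)^[n] (fun p => u p * h p) 0 = u 0 * (dop v)^[n] h 0 := by
  induction n generalizing h with
  | zero => rfl
  | succ n ih =>
    simp only [Function.iterate_succ_apply]
    rw [← ih (sh.dop v) (hh.2 v), dop_mul su sh]
    refine iter_mod (((su.dop v).mul sh).add (su.mul (sh.dop v))) (su.mul (sh.dop v)) ?_ v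
    have := Zf_mul_left (su.dop v) sh hh
    simpa using this

lemma iter_comp {n : ℕ} {h : ℝ × ℝ → ℝ} {φ : ℝ × ℝ → ℝ × ℝ} (sh : Sm h) (sφ : SmM φ)
    (h0 : φ 0 = 0) (hh : Zf n h) (v : ℝ × ℝ) :
    (dop v)^[n] (fun p => h (φ p)) 0 = (dop (fderiv ℝ φ 0 v))^[n] h 0 := by
  induction n generalizing h with
  | zero => simp [h0]
  | succ n ih =>
    simp only [Function.iterate_succ_apply]
    set w := fderiv ℝ φ 0 v with hw
    rw [← ih (sh.dop w) (hh.2 w)]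
    have s1 : Sm (fun p => pdx h (φ p)) := (sh.dop _).comp sφ
    have s2 : Sm (fun p => pdy h (φ p)) := (sh.dop _).comp sφ
    have s3 : Sm (fun p => h (φ p)) := sh.comp sφ
    have s4 : Sm (fun p => dop w h (φ p)) := (sh.dop _).comp sφ
    have t1 : Sm (fun p => (fderiv ℝ φ p v).1 - w.1) := (sφ.dop v).fst.sub contDiff_const
    have t2 : Sm (fun p => (fderiv ℝ φ p v).2 - w.2) := (sφ.dop v).snd.sub contDiff_const
    refine iter_mod (s3.dop v) s4 ?_ v
    have z1 : Zf (1 + n) (fun p => ((fderiv ℝ φ p v).1 - w.1) * pdx h (φ p)) :=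
      Zf_mul t1 s1 ⟨by simp [hw], fun _ => trivial⟩ (Zf_comp (sh.dop _) sφ h0 (hh.2 _))
    have z2 : Zf (1 + n) (fun p => ((fderiv ℝ φ p v).2 - w.2) * pdy h (φ p)) :=
      Zf_mul t2 s2 ⟨by simp [hw], fun _ => trivial⟩ (Zf_comp (sh.dop _) sφ h0 (hh.2 _))
    have := Zf_add (t1.mul s1) (t2.mul s2) z1 z2
    rw [Nat.add_comm n 1]
    convert! this using 2 with p
    rw [dop_comp_split sh sφ, dop_split]
    ring

lemma etaD_split (η : ℝ × ℝ → ℝ × ℝ) (g : ℝ × ℝ → ℝ) :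
    etaD η g = fun p => (η p).1 * pdx g p + (η p).2 * pdy g p := by
  funext p
  exact fderiv_split (fderiv ℝ g p) (η p)

lemma Zf_etaD {n : ℕ} {g : ℝ × ℝ → ℝ} {η : ℝ × ℝ → ℝ × ℝ} (sη : SmM η) (sg : Sm g)
    (hg : Zf (n + 1) g) : Zf n (etaD η g) := by
  rw [etaD_split]
  exact Zf_add (sη.fst.mul (sg.dop _)) (sη.snd.mul (sg.dop _))
    (Zf_mul_left sη.fst (sg.dop _) (hg.2 _)) (Zf_mul_left sη.snd (sg.dop _) (hg.2 _))

lemma etaIter_zero' {n : ℕ} {g : ℝ × ℝ → ℝ} {η : ℝ × ℝ → ℝ × ℝ} (sη : SmM η) (sg : Sm g)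
    (hg : Zf (n + 1) g) : (etaD η)^[n] g 0 = 0 := by
  induction n generalizing g with
  | zero => exact hg.1
  | succ n ih => exact ih (sg.etaD sη) (Zf_etaD sη sg hg)

lemma etaD_add {g h : ℝ × ℝ → ℝ} (sg : Sm g) (sh : Sm h) (η : ℝ × ℝ → ℝ × ℝ) :
    etaD η (fun p => g p + h p) = fun p => etaD η g p + etaD η h p := by
  funext p
  simp only [etaD]
  rw [fderiv_fun_add (sg.diff p) (sh.diff p)]; rfl

lemma etaIter_add {g h : ℝ × ℝ → ℝ} {η : ℝ × ℝ → ℝ × ℝ} (sη : SmM η) (sg : Sm g) (sh : Sm h)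
    (n : ℕ) :
    (etaD η)^[n] (fun p => g p + h p) = fun p => (etaD η)^[n] g p + (etaD η)^[n] h p := by
  induction n generalizing g h with
  | zero => rfl
  | succ n ih =>
    simp only [Function.iterate_succ_apply]
    rw [etaD_add sg sh]
    exact ih (sg.etaD sη) (sh.etaD sη)

lemma etaD_iter_eq {n : ℕ} {g : ℝ × ℝ → ℝ} {η : ℝ × ℝ → ℝ × ℝ} (sη : SmM η) (sg : Sm g)
    (hg : Zf n g) : (etaD η)^[n] g 0 = (dop (η 0))^[n] g 0 := by
  induction n generalizing g with
  | zero => rfl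
  | succ n ih =>
    simp only [Function.iterate_succ_apply]
    set w := η 0 with hw
    rw [← ih (sg.dop w) (hg.2 w)]
    have t1 : Sm (fun p => (η p).1 - w.1) := sη.fst.sub contDiff_const
    have t2 : Sm (fun p => (η p).2 - w.2) := sη.snd.sub contDiff_const
    have s1 : Sm (pdx g) := sg.dop _
    have s2 : Sm (pdy g) := sg.dop _
    have e : etaD η g = fun p => dop w g p +
        (((η p).1 - w.1) * pdx g p + ((η p).2 - w.2) * pdy g p) := by
      rw [etaD_split]
      funext p
      rw [dop_split]; ring
    have z1 : Zf (1 + n) (fun p => ((η p).1 - w.1) * pdx g p) :=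
      Zf_mul t1 s1 ⟨by simp [hw], fun _ => trivial⟩ (hg.2 _)
    have z2 : Zf (1 + n) (fun p => ((η p).2 - w.2) * pdy g p) :=
      Zf_mul t2 s2 ⟨by simp [hw], fun _ => trivial⟩ (hg.2 _)
    have z := Zf_add (t1.mul s1) (t2.mul s2) z1 z2
    rw [Nat.add_comm 1 n] at z
    rw [e, etaIter_add sη (sg.dop w) ((t1.mul s1).add (t2.mul s2))]
    simp only
    rw [etaIter_zero' sη ((t1.mul s1).add (t2.mul s2)) z, add_zero]

lemma etaIter_eq_iterate (η : ℝ × ℝ → ℝ × ℝ) (k : ℕ) (g : ℝ × ℝ → ℝ) :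
    etaIter η k g = (etaD η)^[k] g := by
  induction k with
  | zero => rfl
  | succ k ih => rw [Function.iterate_succ_apply', ← ih]; rfl

lemma etaIter_congr {η ξ : ℝ × ℝ → ℝ × ℝ} (e : η =ᶠ[𝓝 0] ξ) (k : ℕ) (g : ℝ × ℝ → ℝ) :
    etaIter η k g =ᶠ[𝓝 0] etaIter ξ k g := by
  induction k with
  | zero => exact EventuallyEq.rfl
  | succ k ih =>
    filter_upwards [ih.fderiv (𝕜 := ℝ), e] with p hp hq
    simp only [etaIter, etaD, hp, hq]

/-- A locally defined smooth map has the same germ as a globally defined one. -/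
lemma exists_global {ξ : ℝ × ℝ → ℝ × ℝ} {U : Set (ℝ × ℝ)} (hU : U ∈ 𝓝 (0 : ℝ × ℝ))
    (h : ContDiffOn ℝ (⊤ : ℕ∞) ξ U) : ∃ ξ', SmM ξ' ∧ ξ' =ᶠ[𝓝 0] ξ := by
  obtain ⟨r, hr, hrU⟩ := Metric.mem_nhds_iff.1 hU
  let b : ContDiffBump (0 : ℝ × ℝ) := ⟨r / 4, r / 2, by positivity, by linarith⟩
  refine ⟨fun p => b p • ξ p, ?_, ?_⟩
  · rw [SmM, contDiff_iff_contDiffAt]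
    intro p
    by_cases hp : p ∈ Metric.ball (0 : ℝ × ℝ) r
    · exact b.contDiff.contDiffAt.smul
        (h.contDiffAt (mem_of_superset (Metric.isOpen_ball.mem_nhds hp) hrU))
    · have : (fun p => b p • ξ p) =ᶠ[𝓝 p] fun _ => 0 := by
        have hp' : p ∈ (Metric.closedBall (0 : ℝ × ℝ) (r / 2))ᶜ := by
          simp only [Metric.mem_ball, Set.mem_compl_iff, Metric.mem_closedBall] at hp ⊢
          linarith
        filter_upwards [Metric.isClosed_closedBall.isOpen_compl.mem_nhds hp'] with q hq
        have : b q = 0 := b.zero_of_le_dist (by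
          simp only [Set.mem_compl_iff, Metric.mem_closedBall, not_le] at hq
          exact hq.le)
        simp [this]
      exact contDiffAt_const.congr_of_eventuallyEq this
  · filter_upwards [b.eventuallyEq_one] with p hp
    simp [hp]

lemma bij_iff (L : (ℝ × ℝ) →L[ℝ] (ℝ × ℝ)) :
    Function.Bijective L ↔ (L (1, 0)).1 * (L (0, 1)).2 - (L (1, 0)).2 * (L (0, 1)).1 ≠ 0 := by
  set a := (L (1, 0)).1 with ha
  set c := (L (1, 0)).2 with hc
  set b := (L (0, 1)).1 with hb
  set d := (L (0, 1)).2 with hd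
  have hL : ∀ v, L v = (v.1 * a + v.2 * b, v.1 * c + v.2 * d) := by
    intro v
    rw [fderiv_split L v]; ext <;> simp [ha, hb, hc, hd]
  constructor
  · intro h h0
    have e1 : L (d, -c) = 0 := by
      rw [hL]; ext <;> simp only [Prod.fst_zero, Prod.snd_zero]
      · linear_combination h0
      · ring
    have e2 : L (b, -a) = 0 := by
      rw [hL]; ext <;> simp only [Prod.fst_zero, Prod.snd_zero]
      · ring
      · linear_combination -h0
    have f1 := (map_eq_zero_iff L h.1).1 e1
    have f2 := (map_eq_zero_iff L h.1).1 e2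
    simp only [Prod.mk_eq_zero, neg_eq_zero] at f1 f2
    obtain ⟨x, hx⟩ := h.2 (1, 1)
    rw [hL, f1.1, f1.2, f2.1, f2.2] at hx
    simp at hx
  · intro h
    constructor
    · rw [injective_iff_map_eq_zero]
      intro v hv
      rw [hL] at hv
      simp only [Prod.mk_eq_zero] at hv
      have h1 : (a * d - c * b) * v.1 = 0 := by linear_combination d * hv.1 - b * hv.2
      have h2 : (a * d - c * b) * v.2 = 0 := by linear_combination a * hv.2 - c * hv.1
      ext
      · simpa [h] using h1
      · simpa [h] using h2
    · intro w
      obtain ⟨i, hi⟩ : ∃ i, (a * d - c * b) * i = 1 := ⟨_, mul_inv_cancel₀ h⟩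
      refine ⟨((d * w.1 - b * w.2) * i, (a * w.2 - c * w.1) * i), ?_⟩
      rw [hL]
      ext
      · linear_combination w.1 * hi
      · linear_combination w.2 * hi

lemma bij_fderiv_iff (f : ℝ × ℝ → ℝ × ℝ) (p : ℝ × ℝ) :
    Function.Bijective (fderiv ℝ f p) ↔ jacDet f p ≠ 0 := bij_iff _

lemma jacDet_comp {f g : ℝ × ℝ → ℝ × ℝ} (sf : SmM f) (sg : SmM g) (p : ℝ × ℝ) :
    jacDet (fun q => f (g q)) p = jacDet f (g p) * jacDet g p := by
  have := fderiv_fun_comp p (sf.diff (g p)) (sg.diff p)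
  simp only [jacDet]
  rw [this]
  simp only [ContinuousLinearMap.comp_apply]
  rw [fderiv_split (fderiv ℝ f (g p)) (fderiv ℝ g p (1, 0)),
    fderiv_split (fderiv ℝ f (g p)) (fderiv ℝ g p (0, 1))]
  simp
  ring

lemma jacDet_congr {f g : ℝ × ℝ → ℝ × ℝ} (e : f =ᶠ[𝓝 0] g) : jacDet f =ᶠ[𝓝 0] jacDet g := by
  filter_upwards [e.fderiv (𝕜 := ℝ)] with p hp
  simp only [jacDet, hp]

/-- Local inverse of a smooth map with derivative identity-like at the origin. -/
lemma exists_inverse {Φ : ℝ × ℝ → ℝ × ℝ} (sΦ : SmM Φ) (h0 : Φ 0 = 0) (hd : jacDet Φ 0 ≠ 0) :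
    ∃ φ, SmM φ ∧ φ 0 = 0 ∧ ∀ᶠ p in 𝓝 (0 : ℝ × ℝ), Φ (φ p) = p := by
  have mk : ∀ p, jacDet Φ p ≠ 0 → ∃ L : (ℝ × ℝ) ≃L[ℝ] (ℝ × ℝ),
      HasFDerivAt Φ (L : (ℝ × ℝ) →L[ℝ] (ℝ × ℝ)) p := by
    intro p hp
    have hb := (bij_fderiv_iff Φ p).2 hp
    refine ⟨ContinuousLinearEquiv.ofBijective (fderiv ℝ Φ p)
      (LinearMap.ker_eq_bot.2 hb.1) (LinearMap.range_eq_top.2 hb.2), ?_⟩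
    rw [ContinuousLinearEquiv.coe_ofBijective]
    exact (sΦ.diff p).hasFDerivAt
  obtain ⟨L, hL⟩ := mk 0 hd
  have hn : (((⊤ : ℕ∞) : WithTop ℕ∞)) ≠ 0 := by simp
  let e := (ContDiff.contDiffAt sΦ (x := 0)).toOpenPartialHomeomorph Φ hL hn
  have he : ∀ x, e x = Φ x := fun _ => rfl
  have hs : (0 : ℝ × ℝ) ∈ e.source :=
    (ContDiff.contDiffAt sΦ (x := 0)).mem_toOpenPartialHomeomorph_source hL hn
  have ht : (0 : ℝ × ℝ) ∈ e.target := by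
    have := e.map_source hs
    rwa [he, h0] at this
  have hz : e.symm 0 = 0 := by
    have := e.left_inv hs
    rwa [he, h0] at this
  have hO : IsOpen (e.target ∩ e.symm ⁻¹' {p | jacDet Φ p ≠ 0}) :=
    e.isOpen_inter_preimage_symm
      (isOpen_ne_fun (Sm_jacDet sΦ).continuous continuous_const)
  have hmem : (0 : ℝ × ℝ) ∈ (e.target ∩ e.symm ⁻¹' {p | jacDet Φ p ≠ 0}) :=
    ⟨ht, by simpa [hz] using hd⟩
  obtain ⟨φ, sφ, hφ⟩ := exists_global (ξ := e.symm) (hO.mem_nhds hmem) (by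
    intro y hy
    obtain ⟨L', hL'⟩ := mk _ hy.2
    exact (e.contDiffAt_symm hy.1 hL' (ContDiff.contDiffAt sΦ)).contDiffWithinAt)
  refine ⟨φ, sφ, by rw [hφ.eq_of_nhds, hz], ?_⟩
  filter_upwards [hφ, hO.mem_nhds hmem] with p hp hq
  rw [hp, ← he, e.right_inv hq.1]

/-- Homogeneous cubic polynomial. -/
def cub (a b c d : ℝ) : ℝ × ℝ → ℝ := fun p =>
  a * p.1 ^ 3 + b * p.1 ^ 2 * p.2 + c * p.1 * p.2 ^ 2 + d * p.2 ^ 3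

/-- Homogeneous quadratic polynomial. -/
def quad (a b c : ℝ) : ℝ × ℝ → ℝ := fun p => a * p.1 ^ 2 + b * p.1 * p.2 + c * p.2 ^ 2

/-- Linear polynomial. -/
def lin (a b : ℝ) : ℝ × ℝ → ℝ := fun p => a * p.1 + b * p.2

/-- The quartic polynomial of the normal form. -/
def quart (β α : ℝ) : ℝ × ℝ → ℝ := fun p =>
  β * (p.1 ^ 3 * p.2) + α * p.1 ^ 2 * p.2 ^ 2 + p.2 ^ 4

lemma Sm_cub (a b c d : ℝ) : Sm (cub a b c d) := by unfold cub Sm; fun_prop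
lemma Sm_quad (a b c : ℝ) : Sm (quad a b c) := by unfold quad Sm; fun_prop
lemma Sm_lin (a b : ℝ) : Sm (lin a b) := by unfold lin Sm; fun_prop
lemma Sm_quart (a b : ℝ) : Sm (quart a b) := by unfold quart Sm; fun_prop

lemma dop_const (c : ℝ) (v : ℝ × ℝ) : dop v (fun _ => c) = fun _ => 0 := by
  funext p; simp [dop]

lemma dop_p1 (v : ℝ × ℝ) : dop v (fun p => p.1) = fun _ => v.1 := by
  funext p; simp only [dop]; rw [fderiv_fst]; rfl

lemma dop_p2 (v : ℝ × ℝ) : dop v (fun p => p.2) = fun _ => v.2 := by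
  funext p; simp only [dop]; rw [fderiv_snd]; rfl

lemma dop_lin (a b : ℝ) (v : ℝ × ℝ) : dop v (lin a b) = fun _ => a * v.1 + b * v.2 := by
  unfold lin
  rw [dop_add (by (unfold Sm; fun_prop)) (by (unfold Sm; fun_prop)), dop_cmul _ (by (unfold Sm; fun_prop)), dop_cmul _ (by (unfold Sm; fun_prop)),
    dop_p1, dop_p2]

lemma dop_quad (a b c : ℝ) (v : ℝ × ℝ) :
    dop v (quad a b c) = lin (2 * a * v.1 + b * v.2) (b * v.1 + 2 * c * v.2) := by
  have : quad a b c = fun p => p.1 * lin a b p + p.2 * lin 0 c p := by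
    funext p; simp only [quad, lin]; ring
  rw [this, dop_add (by unfold lin Sm; fun_prop) (by unfold lin Sm; fun_prop),
    dop_mul (by (unfold Sm; fun_prop)) (Sm_lin _ _), dop_mul (by (unfold Sm; fun_prop)) (Sm_lin _ _), dop_lin, dop_lin,
    dop_p1, dop_p2]
  funext p; simp only [lin]; ring

lemma dop_cub (a b c d : ℝ) (v : ℝ × ℝ) :
    dop v (cub a b c d) = quad (3 * a * v.1 + b * v.2) (2 * b * v.1 + 2 * c * v.2)
      (c * v.1 + 3 * d * v.2) := by
  have : cub a b c d = fun p => p.1 * quad a b c p + p.2 * quad 0 0 d p := by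
    funext p; simp only [quad, cub]; ring
  rw [this, dop_add (by unfold quad Sm; fun_prop) (by unfold quad Sm; fun_prop),
    dop_mul (by (unfold Sm; fun_prop)) (Sm_quad _ _ _), dop_mul (by (unfold Sm; fun_prop)) (Sm_quad _ _ _), dop_quad,
    dop_quad, dop_p1, dop_p2]
  funext p; simp only [quad, lin]; ring

lemma pdy_quart (β α : ℝ) : pdy (quart β α) = cub β (2 * α) 0 4 := by
  have : quart β α = fun p => p.1 * cub 0 β α 0 p + p.2 * cub 0 0 0 1 p := by
    funext p; simp only [quart, cub]; ring
  rw [this, pdy, dop_add (by unfold cub Sm; fun_prop) (by unfold cub Sm; fun_prop),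
    dop_mul (by (unfold Sm; fun_prop)) (Sm_cub _ _ _ _), dop_mul (by (unfold Sm; fun_prop)) (Sm_cub _ _ _ _), dop_cub,
    dop_cub, dop_p1, dop_p2]
  funext p; simp only [quad, cub]; ring

lemma Zf_cub (a b c d : ℝ) : Zf 3 (cub a b c d) := by
  refine ⟨by simp [cub], fun v => ⟨by simp [dop_cub, quad], fun w => ⟨?_, fun _ => trivial⟩⟩⟩
  simp [dop_cub, dop_quad, lin]

lemma Zf_four {r : ℝ × ℝ → ℝ} (sr : Sm r) (h : Zf 3 r)
    (h1 : pdx (pdx (pdx r)) 0 = 0) (h2 : pdx (pdx (pdy r)) 0 = 0)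
    (h3 : pdx (pdy (pdy r)) 0 = 0) (h4 : pdy (pdy (pdy r)) 0 = 0) : Zf 4 r := by
  have c1 : pdy (pdx r) = pdx (pdy r) := dop_comm sr _ _
  have c2 : pdy (pdx (pdx r)) = pdx (pdx (pdy r)) := by
    rw [← c1]; exact dop_comm (sr.dop _) _ _
  have c3 : pdy (pdx (pdy r)) = pdx (pdy (pdy r)) := dop_comm (sr.dop _) _ _
  have z1 : ∀ g : ℝ × ℝ → ℝ, g 0 = 0 → Zf 1 g := fun g hg => ⟨hg, fun _ => trivial⟩
  have mk : ∀ (k : ℕ) (g : ℝ × ℝ → ℝ), Sm g → g 0 = 0 → Zf k (pdx g) → Zf k (pdy g) →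
      Zf (k + 1) g := fun k g sg a b c => (Zf_succ_iff sg).2 ⟨a, b, c⟩
  have s1 : Sm (pdx r) := sr.dop _
  have s2 : Sm (pdy r) := sr.dop _
  refine mk 3 _ sr h.1 (mk 2 _ s1 (h.2 _).1 (mk 1 _ (s1.dop _) ((h.2 _).2 _).1 (z1 _ h1) (z1 _ ?_))
    (mk 1 _ (s1.dop _) ((h.2 _).2 _).1 (z1 _ ?_) (z1 _ ?_)))
    (mk 2 _ s2 (h.2 _).1 (mk 1 _ (s2.dop _) ((h.2 _).2 _).1 (z1 _ h2) (z1 _ ?_))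
    (mk 1 _ (s2.dop _) ((h.2 _).2 _).1 (z1 _ h3) (z1 _ h4)))
  · rw [c2, h2]
  · rw [c1, h2]
  · rw [c1, c3, h3]
  · rw [c3, h3]

lemma Zf_sub_cub {q : ℝ × ℝ → ℝ} (sq : Sm q) (h : Zf 3 q) {a b c d : ℝ}
    (h1 : pdx (pdx (pdx q)) 0 = 6 * a) (h2 : pdx (pdx (pdy q)) 0 = 2 * b)
    (h3 : pdx (pdy (pdy q)) 0 = 2 * c) (h4 : pdy (pdy (pdy q)) 0 = 6 * d) :
    Zf 4 (fun p => q p - cub a b c d p) := by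
  have sc := Sm_cub a b c d
  refine Zf_four (sq.sub sc) (Zf_sub sq sc h (Zf_cub _ _ _ _)) ?_ ?_ ?_ ?_
  all_goals
    simp only [pdx, pdy] at *
    rw [dop_sub sq sc, dop_sub (sq.dop _) (sc.dop _),
      dop_sub ((sq.dop _).dop _) ((sc.dop _).dop _)]
    simp only [h1, h2, h3, h4, dop_cub, dop_quad, dop_lin]
    ring

lemma fderiv_smap (k m l : ℝ) (p v : ℝ × ℝ) :
    fderiv ℝ (fun p : ℝ × ℝ => (k * p.1, m * p.1 + l * p.2)) p v =
      (k * v.1, m * v.1 + l * v.2) := by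
  have s : SmM (fun p : ℝ × ℝ => (k * p.1, m * p.1 + l * p.2)) := by unfold SmM; fun_prop
  ext
  · rw [← dop_fst s]
    simp only
    rw [dop_cmul _ (by (unfold Sm; fun_prop)), dop_p1]
  · rw [← dop_snd s]
    exact congrFun (dop_lin m l v) p

lemma Zf_of_pdy {k : ℕ} {r : ℝ × ℝ → ℝ} (sr : Sm r) (h0 : ∀ x, r (x, 0) = 0)
    (h : Zf k (pdy r)) : Zf (k + 1) r := by
  induction k generalizing r with
  | zero => exact ⟨h0 0, fun _ => trivial⟩
  | succ k ih =>
    rw [Zf_succ_iff sr]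
    refine ⟨h0 0, ih (sr.dop _) ?_ ?_, h⟩
    · intro x
      have s : SmM (fun p : ℝ × ℝ => (1 * p.1, 0 * p.1 + 0 * p.2)) := by unfold SmM; fun_prop
      have h1 := dop_comp sr s (1, 0) (x, 0)
      rw [fderiv_smap] at h1
      have h2 : (fun q : ℝ × ℝ => r (1 * q.1, 0 * q.1 + 0 * q.2)) = fun _ => 0 := by
        funext q; simpa using h0 q.1
      rw [h2, dop_zero] at h1
      simpa [pdx, dop] using h1.symm
    · have : pdy (pdx r) = pdx (pdy r) := dop_comm sr _ _
      rw [this]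
      exact h.2 _

lemma Zf_three_iff {g : ℝ × ℝ → ℝ} (sg : Sm g) (h0 : g 0 = 0) :
    Zf 3 g ↔ fderiv ℝ g 0 = 0 ∧ hess g = 0 := by
  constructor
  · intro h
    refine ⟨?_, ?_⟩
    · ext1
      · ext; exact (h.2 (1, 0)).1
      · ext; exact (h.2 (0, 1)).1
    · ext i j
      fin_cases i <;> fin_cases j
      · exact ((h.2 _).2 _).1
      · exact ((h.2 _).2 _).1
      · exact ((h.2 _).2 _).1
      · exact ((h.2 _).2 _).1
  · rintro ⟨h1, h2⟩
    have z1 : ∀ g : ℝ × ℝ → ℝ, g 0 = 0 → Zf 1 g := fun g hg => ⟨hg, fun _ => trivial⟩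
    have e := fun i j => congrFun (congrFun h2 i) j
    exact (Zf_succ_iff sg).2 ⟨h0, (Zf_succ_iff (sg.dop _)).2
      ⟨by simp [dop, h1], z1 _ (e 0 0), z1 _ (e 1 0)⟩,
      (Zf_succ_iff (sg.dop _)).2 ⟨by simp [dop, h1], z1 _ (e 0 1), z1 _ (e 1 1)⟩⟩

lemma corank_ne_zero {f : ℝ × ℝ → ℝ × ℝ} (h : CorankOne f) : fderiv ℝ f 0 ≠ 0 := by
  intro h0
  unfold CorankOne at h
  rw [h0] at h
  simp at h

lemma corank_jacDet {f : ℝ × ℝ → ℝ × ℝ} (h : CorankOne f) : jacDet f 0 = 0 := by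
  by_contra h0
  have hb := (bij_fderiv_iff f 0).2 h0
  unfold CorankOne at h
  have h1 : LinearMap.range (fderiv ℝ f 0).toLinearMap = ⊤ := LinearMap.range_eq_top.2 hb.2
  rw [LinearMap.rank, h1, rank_top] at h
  have h2 : Module.finrank ℝ (ℝ × ℝ) = 1 := by
    rw [Module.finrank, h]; simp
  simp at h2

lemma corank_ker {f : ℝ × ℝ → ℝ × ℝ} (h : CorankOne f) {v w : ℝ × ℝ} (hv : v ≠ 0)
    (h1 : fderiv ℝ f 0 v = 0) (h2 : fderiv ℝ f 0 w = 0) : ∃ s : ℝ, w = s • v := by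
  by_cases hd : v.1 * w.2 - v.2 * w.1 = 0
  · by_cases hv1 : v.1 = 0
    · have hv2 : v.2 ≠ 0 := fun h => hv (Prod.ext hv1 h)
      refine ⟨w.2 / v.2, ?_⟩
      rw [hv1] at hd
      have : w.1 = 0 := by simpa [hv2] using hd
      ext
      · simp [this, hv1]
      · simp [hv2]
    · refine ⟨w.1 / v.1, ?_⟩
      ext
      · simp [hv1]
      · simp only [Prod.smul_snd, smul_eq_mul]; field_simp; linarith
  · exfalso
    apply corank_ne_zero h
    obtain ⟨i, hi⟩ : ∃ i, (v.1 * w.2 - v.2 * w.1) * i = 1 := ⟨_, mul_inv_cancel₀ hd⟩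
    refine ContinuousLinearMap.ext fun z => ?_
    have : z = ((z.1 * w.2 - z.2 * w.1) * i) • v + ((v.1 * z.2 - v.2 * z.1) * i) • w := by
      ext
      · simp only [Prod.fst_add, Prod.smul_fst, smul_eq_mul]; linear_combination - z.1 * hi
      · simp only [Prod.snd_add, Prod.smul_snd, smul_eq_mul]; linear_combination - z.2 * hi
    rw [this, map_add, map_smul, map_smul, h1, h2]; simp

lemma jet_iff {r : ℕ} {F G : ℝ × ℝ → ℝ × ℝ} (sF : SmM F) (sG : SmM G) :
    (∀ i ≤ r, iteratedFDeriv ℝ i F 0 = iteratedFDeriv ℝ i G 0) ↔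
      Zf (r + 1) (fun p => (F p).1 - (G p).1) ∧ Zf (r + 1) (fun p => (F p).2 - (G p).2) := by
  rw [Zf_iff_iteratedFDeriv (sF.fst.sub sG.fst), Zf_iff_iteratedFDeriv (sF.snd.sub sG.snd),
    ← forall₂_and]
  refine forall₂_congr fun i _ => ?_
  have hi : ((i : ℕ∞) : WithTop ℕ∞) ≤ ((⊤ : ℕ∞) : WithTop ℕ∞) := by exact_mod_cast le_top
  have sD : SmM (fun p => F p - G p) := ContDiff.sub sF sG
  have e0 : iteratedFDeriv ℝ i (fun p => F p - G p) 0 =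
      iteratedFDeriv ℝ i F 0 - iteratedFDeriv ℝ i G 0 :=
    iteratedFDeriv_sub_apply ((ContDiff.contDiffAt sF).of_le hi) ((ContDiff.contDiffAt sG).of_le hi)
  have e1 := (ContinuousLinearMap.fst ℝ ℝ ℝ).iteratedFDeriv_comp_left (x := 0) (i := i)
    (ContDiff.contDiffAt sD) hi
  have e2 := (ContinuousLinearMap.snd ℝ ℝ ℝ).iteratedFDeriv_comp_left (x := 0) (i := i)
    (ContDiff.contDiffAt sD) hi
  rw [← sub_eq_zero, ← e0]
  change _ ↔ iteratedFDeriv ℝ i ((ContinuousLinearMap.fst ℝ ℝ ℝ) ∘ fun p => F p - G p) 0 = 0 ∧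
    iteratedFDeriv ℝ i ((ContinuousLinearMap.snd ℝ ℝ ℝ) ∘ fun p => F p - G p) 0 = 0
  rw [e1, e2]
  constructor
  · intro h; rw [h]; constructor <;> ext m <;> simp
  · rintro ⟨h1, h2⟩
    ext m
    · exact congrArg (fun T => T m) h1
    · exact congrArg (fun T => T m) h2

lemma jacDet_eq {f : ℝ × ℝ → ℝ × ℝ} (sf : SmM f) (p : ℝ × ℝ) :
    jacDet f p = dop (1, 0) (fun q => (f q).1) p * dop (0, 1) (fun q => (f q).2) p -
      dop (1, 0) (fun q => (f q).2) p * dop (0, 1) (fun q => (f q).1) p := by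
  rw [dop_fst sf, dop_fst sf, dop_snd sf, dop_snd sf]; rfl

lemma jacDet_mod {k : ℕ} {F G : ℝ × ℝ → ℝ × ℝ} (sF : SmM F) (sG : SmM G)
    (h1 : Zf (k + 1) (fun p => (F p).1 - (G p).1)) (h2 : Zf (k + 1) (fun p => (F p).2 - (G p).2)) :
    Zf k (fun p => jacDet F p - jacDet G p) := by
  have d1 : ∀ v, Zf k (fun p => dop v (fun q => (F q).1) p - dop v (fun q => (G q).1) p) := by
    intro v
    rw [← dop_sub sF.fst sG.fst]; exact h1.2 v
  have d2 : ∀ v, Zf k (fun p => dop v (fun q => (F q).2) p - dop v (fun q => (G q).2) p) := by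
    intro v
    rw [← dop_sub sF.snd sG.snd]; exact h2.2 v
  have s1 : ∀ v, Sm (fun p => dop v (fun q => (F q).1) p - dop v (fun q => (G q).1) p) :=
    fun v => (sF.fst.dop v).sub (sG.fst.dop v)
  have s2 : ∀ v, Sm (fun p => dop v (fun q => (F q).2) p - dop v (fun q => (G q).2) p) :=
    fun v => (sF.snd.dop v).sub (sG.snd.dop v)
  have t1 := Zf_mul_right (s1 (1, 0)) (sF.snd.dop (0, 1)) (d1 _)
  have t2 := Zf_mul_left (sG.fst.dop (1, 0)) (s2 (0, 1)) (d2 _)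
  have t3 := Zf_mul_right (s2 (1, 0)) (sF.fst.dop (0, 1)) (d2 _)
  have t4 := Zf_mul_left (sG.snd.dop (1, 0)) (s1 (0, 1)) (d1 _)
  have a1 := Zf_add ((s1 (1, 0)).mul (sF.snd.dop (0, 1))) ((sG.fst.dop (1, 0)).mul (s2 (0, 1))) t1 t2
  have a2 := Zf_add ((s2 (1, 0)).mul (sF.fst.dop (0, 1))) ((sG.snd.dop (1, 0)).mul (s1 (0, 1))) t3 t4
  have a3 := Zf_sub (((s1 (1, 0)).mul (sF.snd.dop (0, 1))).add
    ((sG.fst.dop (1, 0)).mul (s2 (0, 1)))) (((s2 (1, 0)).mul (sF.fst.dop (0, 1))).add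
    ((sG.snd.dop (1, 0)).mul (s1 (0, 1)))) a1 a2
  convert! a3 using 2 with p
  rw [jacDet_eq sF, jacDet_eq sG]
  ring

lemma SmM_pair {g h : ℝ × ℝ → ℝ} (sg : Sm g) (sh : Sm h) : SmM (fun p => (g p, h p)) :=
  ContDiff.prodMk sg sh

lemma jacDet_form {g : ℝ × ℝ → ℝ} (sg : Sm g) : jacDet (fun p => (p.1, g p)) = pdy g := by
  funext p
  rw [jacDet_eq (SmM_pair contDiff_fst sg)]
  simp only [dop_p1]
  simp [pdy]

lemma forward_dir {f η : ℝ × ℝ → ℝ × ℝ} (sf : SmM f) (hf0 : f 0 = 0) (hcr : CorankOne f)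
    (hη0 : η 0 ≠ 0) (hker : fderiv ℝ f 0 (η 0) = 0) {β α : ℝ}
    (H : JetEquiv 4 f (fun p => (p.1, quart β α p))) :
    Zf 3 (jacDet f) ∧ (dop (η 0))^[3] (jacDet f) 0 ≠ 0 := by
  obtain ⟨φ, ψ, sφ, sψ, φ0, ψ0, bφ, bψ, hj⟩ := H
  have sfφ : SmM (fun p => f (φ p)) := ContDiff.comp sf sφ
  have sF : SmM (fun p => ψ (f (φ p))) := ContDiff.comp sψ sfφ
  have sG : SmM (fun p : ℝ × ℝ => (p.1, quart β α p)) := SmM_pair contDiff_fst (Sm_quart _ _)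
  obtain ⟨z1, z2⟩ := (jet_iff sF sG).1 hj
  have zm := jacDet_mod sF sG z1 z2
  rw [jacDet_form (Sm_quart β α), pdy_quart] at zm
  have sJ := Sm_jacDet sF
  have sC := Sm_cub β (2 * α) 0 4
  have zF : Zf 3 (jacDet (fun p => ψ (f (φ p)))) := by
    have := Zf_add (sJ.sub sC) sC (Zf_mono zm) (Zf_cub _ _ _ _)
    simpa using this
  have dF : (dop (0, 1))^[3] (jacDet (fun p => ψ (f (φ p)))) 0 = 24 := by
    rw [iter_mod sJ sC zm]
    simp only [Function.iterate_succ_apply, Function.iterate_zero_apply, dop_cub, dop_quad,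
      dop_lin]
    norm_num
  set u : ℝ × ℝ → ℝ := fun p => jacDet ψ (f (φ p)) * jacDet φ p with hu
  have su : Sm u := ((Sm_jacDet sψ).comp sfφ).mul (Sm_jacDet sφ)
  have sl : Sm (fun p => jacDet f (φ p)) := (Sm_jacDet sf).comp sφ
  have eF : jacDet (fun p => ψ (f (φ p))) = fun p => u p * jacDet f (φ p) := by
    funext p
    rw [jacDet_comp sψ sfφ, jacDet_comp sf sφ]
    simp only [hu]; ring
  have hφd := (bij_fderiv_iff φ 0).1 bφ
  have hψd := (bij_fderiv_iff ψ 0).1 bψ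
  have u0 : u 0 ≠ 0 := by simp only [hu, φ0, hf0]; exact mul_ne_zero hψd hφd
  rw [eF] at zF dF
  have zl : Zf 3 (fun p => jacDet f (φ p)) := Zf_cancel su sl u0 zF
  have zf := Zf_comp_cancel (Sm_jacDet sf) sφ φ0 hφd zl
  refine ⟨zf, ?_⟩
  rw [iter_mul su sl zl, iter_comp (Sm_jacDet sf) sφ φ0 zf] at dF
  -- the direction is in the kernel
  have hk : fderiv ℝ f 0 (fderiv ℝ φ 0 (0, 1)) = 0 := by
    have e1 : fderiv ℝ (fun p => ψ (f (φ p))) 0 (0, 1) = 0 := by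
      have a1 := (z1.2 (0, 1)).1
      have a2 := (z2.2 (0, 1)).1
      rw [dop_sub sF.fst sG.fst] at a1
      rw [dop_sub sF.snd sG.snd] at a2
      simp only at a1 a2
      rw [dop_fst sF, dop_p1] at a1
      rw [dop_snd sF] at a2
      have a3 : dop (0, 1) (quart β α) 0 = 0 := by
        have := congrFun (pdy_quart β α) 0
        simpa [pdy, cub] using this
      have a4 : (fun p : ℝ × ℝ => quart β α p) = quart β α := rfl
      rw [a4, a3] at a2
      ext
      · simpa using a1
      · simpa using a2
    have e2 := fderiv_fun_comp (0 : ℝ × ℝ) (sψ.differentiable (by simp) (f (φ 0))) (sfφ.diff 0)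
    have e3 := fderiv_fun_comp (0 : ℝ × ℝ) (sf.diff (φ 0)) (SmM.diff sφ 0)
    rw [e2, e3, φ0, hf0] at e1
    exact (map_eq_zero_iff _ bψ.1).1 e1
  obtain ⟨s, hs⟩ := corank_ker hcr hη0 hker hk
  rw [hs] at dF
  intro h0
  have sl' := Sm_jacDet sf
  have esc : ∀ (g : ℝ × ℝ → ℝ), dop (s • η 0) g = fun p => s * dop (η 0) g p := by
    intro g; funext p; simp [dop]
  have e3 : (dop (s • η 0))^[3] (jacDet f) 0 = s ^ 3 * (dop (η 0))^[3] (jacDet f) 0 := by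
    simp only [Function.iterate_succ_apply, Function.iterate_zero_apply]
    rw [esc (jacDet f), dop_cmul s (sl'.dop _), esc (dop (η 0) (jacDet f)), dop_cmul s (sl'.dop _ |>.dop _ |> contDiff_const.mul), dop_cmul s ((sl'.dop _).dop _), esc]
    simp only; ring
  rw [e3, h0] at dF
  norm_num at dF

/-- Linear normalization. -/
lemma linear_norm {f : ℝ × ℝ → ℝ × ℝ} (sf : SmM f) (hf0 : f 0 = 0) (hcr : CorankOne f)
    {v : ℝ × ℝ} (hv : v ≠ 0) (hker : fderiv ℝ f 0 v = 0) :
    ∃ A B : ℝ × ℝ → ℝ × ℝ, SmM A ∧ SmM B ∧ A 0 = 0 ∧ B 0 = 0 ∧ jacDet A 0 ≠ 0 ∧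
      jacDet B 0 ≠ 0 ∧ fderiv ℝ A 0 (0, 1) = v ∧
      fderiv ℝ (fun p => B (f (A p))) 0 (1, 0) = (1, 0) ∧
      fderiv ℝ (fun p => B (f (A p))) 0 (0, 1) = 0 := by
  have lm : ∀ a b c d : ℝ, ∃ A : (ℝ × ℝ) →L[ℝ] (ℝ × ℝ),
      ∀ p, A p = (a * p.1 + b * p.2, c * p.1 + d * p.2) := by
    intro a b c d
    refine ⟨(a • ContinuousLinearMap.fst ℝ ℝ ℝ + b • ContinuousLinearMap.snd ℝ ℝ ℝ).prod
      (c • ContinuousLinearMap.fst ℝ ℝ ℝ + d • ContinuousLinearMap.snd ℝ ℝ ℝ), fun p => ?_⟩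
    simp
  have nz : ∀ w : ℝ × ℝ, w ≠ 0 → w.1 ^ 2 + w.2 ^ 2 ≠ 0 := by
    intro w hw h
    apply hw
    ext
    · simp only [Prod.fst_zero]; nlinarith [sq_nonneg w.1, sq_nonneg w.2]
    · simp only [Prod.snd_zero]; nlinarith [sq_nonneg w.1, sq_nonneg w.2]
  have hvn := nz v hv
  set u := fderiv ℝ f 0 (v.2, -v.1) with hu
  have hu0 : u ≠ 0 := by
    intro h
    obtain ⟨s, hs⟩ := corank_ker hcr hv hker h
    have h1 : v.2 = s * v.1 := congrArg Prod.fst hs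
    have h2 : -v.1 = s * v.2 := congrArg Prod.snd hs
    apply hvn
    linear_combination v.2 * h1 - v.1 * h2
  have hun := nz u hu0
  set n := u.1 ^ 2 + u.2 ^ 2 with hn
  obtain ⟨A, hA⟩ := lm v.2 v.1 (-v.1) v.2
  obtain ⟨B, hB⟩ := lm (u.1 / n) (u.2 / n) (-u.2) u.1
  have sA : SmM A := A.contDiff
  have sB : SmM B := B.contDiff
  have sfA : SmM (fun p => f (A p)) := ContDiff.comp sf sA
  have key : ∀ w, fderiv ℝ (fun p => B (f (A p))) 0 w = B (fderiv ℝ f 0 (A w)) := by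
    intro w
    have e2 := fderiv_fun_comp (0 : ℝ × ℝ) (sB.diff (f (A 0))) (sfA.diff 0)
    have e3 := fderiv_fun_comp (0 : ℝ × ℝ) (sf.diff (A 0)) (sA.diff 0)
    rw [e2, e3]
    simp
  refine ⟨A, B, sA, sB, map_zero _, map_zero _, ?_, ?_, ?_, ?_, ?_⟩
  · simp only [jacDet, ContinuousLinearMap.fderiv, hA]
    intro h; apply hvn; simp at h; linear_combination h
  · simp only [jacDet, ContinuousLinearMap.fderiv, hB]
    intro h
    apply one_ne_zero (α := ℝ)
    have : n / n = 1 := div_self hun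
    rw [← this, ← h]
    simp only [hn]; ring
  · simp [hA]
  · rw [key, hA]
    have : ((v.2 * ((1 : ℝ), (0 : ℝ)).1 + v.1 * ((1 : ℝ), (0 : ℝ)).2,
      -v.1 * ((1 : ℝ), (0 : ℝ)).1 + v.2 * ((1 : ℝ), (0 : ℝ)).2) : ℝ × ℝ) = (v.2, -v.1) := by simp
    rw [this, ← hu, hB]
    ext
    · have : n / n = 1 := div_self hun
      simp only
      rw [← this]; simp only [hn]; ring
    · simp only; ring
  · rw [key, hA]
    simp [hker]

/-- Normal form `(x, g)`. -/
lemma form_norm {F : ℝ × ℝ → ℝ × ℝ} (sF : SmM F) (hF0 : F 0 = 0)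
    (h1 : fderiv ℝ F 0 (1, 0) = (1, 0)) (h2 : fderiv ℝ F 0 (0, 1) = 0) :
    ∃ (φ : ℝ × ℝ → ℝ × ℝ) (g : ℝ × ℝ → ℝ), SmM φ ∧ Sm g ∧ φ 0 = 0 ∧ g 0 = 0 ∧
      (∀ w, fderiv ℝ φ 0 w = w) ∧ (fun p => F (φ p)) =ᶠ[𝓝 0] fun p => (p.1, g p) := by
  have sΦ : SmM (fun p => ((F p).1, p.2)) := SmM_pair sF.fst contDiff_snd
  have hD : ∀ w, fderiv ℝ (fun p => ((F p).1, p.2)) 0 w = w := by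
    intro w
    ext
    · rw [← dop_fst sΦ]
      simp only
      rw [dop_fst sF, fderiv_split, h1, h2]; simp
    · rw [← dop_snd sΦ]
      simp only
      rw [dop_p2]
  obtain ⟨φ, sφ, φ0, hφ⟩ := exists_inverse sΦ (by simp [hF0]) (by simp [jacDet, hD])
  refine ⟨φ, fun p => (F (φ p)).2, sφ, (ContDiff.comp sF sφ : SmM (fun p => F (φ p))).snd, φ0,
    by simp [φ0, hF0], ?_, ?_⟩
  · intro w
    have e1 : (fun p => (fun p => ((F p).1, p.2)) (φ p)) =ᶠ[𝓝 0] fun p => p := hφ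
    have e2 := e1.fderiv_eq (𝕜 := ℝ)
    have e3 := fderiv_fun_comp (0 : ℝ × ℝ) (sΦ.diff (φ 0)) (sφ.diff 0)
    rw [e3, φ0] at e2
    have e4 := congrArg (fun T => T w) e2
    simp only [ContinuousLinearMap.comp_apply, hD] at e4
    rw [e4]
    simp
  · filter_upwards [hφ] with p hp
    have := congrArg Prod.fst hp
    simp only at this
    exact Prod.ext this rfl

lemma cube_root (x : ℝ) : ∃ k : ℝ, k ^ 3 = x := by
  have hc : Continuous (fun k : ℝ => k ^ 3) := by fun_prop
  have h := mem_range_of_exists_le_of_exists_ge hc (c := x)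
    ⟨-(|x| + 1), by nlinarith [abs_nonneg x, neg_abs_le x, pow_nonneg (abs_nonneg x) 3, sq_nonneg |x|]⟩
    ⟨|x| + 1, by nlinarith [abs_nonneg x, le_abs_self x, pow_nonneg (abs_nonneg x) 3, sq_nonneg |x|]⟩
  exact h

/-- The scalar normal form computation. -/
lemma scalar_norm {g : ℝ × ℝ → ℝ} (sg : Sm g) (hz : Zf 3 (pdy g))
    (hd : pdy (pdy (pdy (pdy g))) 0 ≠ 0) :
    ∃ k m c β α : ℝ, k ≠ 0 ∧ c ≠ 0 ∧ (β = 0 ∨ β = 1) ∧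
      Zf 5 (fun p => c * (g (k * p.1, m * p.1 + 1 * p.2) - g (k * p.1, m * p.1 + 0 * p.2)) -
        quart β α p) := by
  set q := pdy g with hq
  have sq : Sm q := sg.dop _
  set d := pdy (pdy (pdy q)) 0 with hd'
  set c0 := pdx (pdy (pdy q)) 0 with hc0
  set b := pdx (pdx (pdy q)) 0 with hb
  set a := pdx (pdx (pdx q)) 0 with ha
  set μ := -c0 / d with hμ
  set κ := a + 3 * μ * b + 3 * μ ^ 2 * c0 + μ ^ 3 * d with hκ
  obtain ⟨k, β, hk, hβ, hkβ⟩ : ∃ k β : ℝ, k ≠ 0 ∧ (β = 0 ∨ β = 1) ∧ 24 / d * (k ^ 3 * κ) = 6 * β := by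
    by_cases h : κ = 0
    · exact ⟨1, 0, one_ne_zero, Or.inl rfl, by rw [h]; ring⟩
    · obtain ⟨k, hk⟩ := cube_root (d / (4 * κ))
      refine ⟨k, 1, ?_, Or.inr rfl, ?_⟩
      · rintro rfl
        have : d / (4 * κ) ≠ 0 := by positivity
        apply this; rw [← hk]; norm_num
      · rw [hk]; field_simp; norm_num
  set m := k * μ with hm
  set c := 24 / d with hc
  have hS : ∀ l : ℝ, SmM (fun p : ℝ × ℝ => (k * p.1, m * p.1 + l * p.2)) := by
    intro l; unfold SmM; fun_prop
  have hcomp : ∀ (r : ℝ × ℝ → ℝ) (v : ℝ × ℝ), Sm r →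
      dop v (fun p => c * r (k * p.1, m * p.1 + 1 * p.2)) =
        fun p => c * dop (k * v.1, m * v.1 + 1 * v.2) r (k * p.1, m * p.1 + 1 * p.2) := by
    intro r v sr
    have s : Sm (fun p => r (k * p.1, m * p.1 + 1 * p.2)) := sr.comp (hS 1)
    rw [dop_cmul c s]
    funext p
    rw [dop_comp sr (hS 1), fderiv_smap]; rfl
  have s1 : Sm (fun p => g (k * p.1, m * p.1 + 1 * p.2)) := sg.comp (hS 1)
  have s2 : Sm (fun p => g (k * p.1, m * p.1 + 0 * p.2)) := sg.comp (hS 0)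
  have sQ : Sm (fun p => c * q (k * p.1, m * p.1 + 1 * p.2)) := contDiff_const.mul (sq.comp (hS 1))
  have zQ : Zf 3 (fun p => c * q (k * p.1, m * p.1 + 1 * p.2)) :=
    Zf_mul_left contDiff_const (sq.comp (hS 1)) (Zf_comp sq (hS 1) (by simp) hz)
  have third : ∀ v1 v2 v3 : ℝ × ℝ, dop v1 (dop v2 (dop v3
      (fun p => c * q (k * p.1, m * p.1 + 1 * p.2)))) 0 =
      c * dop (k * v1.1, m * v1.1 + 1 * v1.2) (dop (k * v2.1, m * v2.1 + 1 * v2.2)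
        (dop (k * v3.1, m * v3.1 + 1 * v3.2) q)) 0 := by
    intro v1 v2 v3
    rw [hcomp q v3 sq, hcomp _ v2 (sq.dop _), hcomp _ v1 ((sq.dop _).dop _)]
    simp [Prod.mk_zero_zero]
  have ev : ((k * 0, m * 0 + 1 * 1) : ℝ × ℝ) = (0, 1) := by simp
  have eh : ((k * 1, m * 1 + 1 * 0) : ℝ × ℝ) = (k, m) := by simp
  have hdd : d * d⁻¹ = 1 := mul_inv_cancel₀ hd
  have mud : μ * d = -c0 := by rw [hμ]; field_simp
  refine ⟨k, m, c, β, pdx (pdx (pdy (fun p => c * q (k * p.1, m * p.1 + 1 * p.2)))) 0 / 4, hk,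
    by rw [hc]; positivity, hβ, ?_⟩
  set α := pdx (pdx (pdy (fun p => c * q (k * p.1, m * p.1 + 1 * p.2)))) 0 / 4 with hα
  have sh : Sm (fun p : ℝ × ℝ => c * (g (k * p.1, m * p.1 + 1 * p.2) -
      g (k * p.1, m * p.1 + 0 * p.2))) := contDiff_const.mul (s1.sub s2)
  refine Zf_of_pdy (sh.sub (Sm_quart β α)) ?_ ?_
  · intro x; simp [quart]
  · have e : pdy (fun p => c * (g (k * p.1, m * p.1 + 1 * p.2) - g (k * p.1, m * p.1 + 0 * p.2)) -
        quart β α p) = fun p => c * q (k * p.1, m * p.1 + 1 * p.2) - cub β (2 * α) 0 4 p := by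
      rw [pdy, dop_sub sh (Sm_quart _ _), dop_cmul c (s1.sub s2), dop_sub s1 s2]
      funext p
      have := congrFun (pdy_quart β α) p
      simp only [pdy] at this
      simp only
      rw [this, dop_comp sg (hS 1), dop_comp sg (hS 0), fderiv_smap, fderiv_smap]
      simp [hq, pdy, dop, Prod.mk_zero_zero]
    rw [e]
    refine Zf_sub_cub sQ zQ ?_ ?_ ?_ ?_
    · rw [← hkβ]
      simp only [pdx]
      rw [third]
      simp only [eh]
      have x1 : ∀ r : ℝ × ℝ → ℝ, dop (k, m) r = fun p => k * pdx r p + m * pdy r p :=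
        fun r => funext (dop_split _ r)
      have lin3 : ∀ (w : ℝ × ℝ) (r : ℝ × ℝ → ℝ), Sm r → dop w (fun p => k * pdx r p + m * pdy r p) =
          fun p => k * dop w (pdx r) p + m * dop w (pdy r) p := by
        intro w r sr
        have t1 : Sm (pdx r) := sr.dop _
        have t2 : Sm (pdy r) := sr.dop _
        rw [dop_add (contDiff_const.mul t1) (contDiff_const.mul t2), dop_cmul k t1, dop_cmul m t2]
      have y2 : dop (k, m) (dop (k, m) q) = fun p =>
          k * (k * pdx (pdx q) p + m * pdx (pdy q) p) + m * (k * pdx (pdy q) p + m * pdy (pdy q) p) := by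
        rw [x1 q, lin3 _ _ sq, x1, x1]
        have : pdy (pdx q) = pdx (pdy q) := dop_comm sq _ _
        rw [this]
      have c2 : pdy (pdx (pdx q)) = pdx (pdx (pdy q)) := by
        have c1 : pdy (pdx q) = pdx (pdy q) := dop_comm sq _ _
        rw [← c1]; exact dop_comm (sq.dop _) _ _
      have c3 : pdy (pdx (pdy q)) = pdx (pdy (pdy q)) := dop_comm (sq.dop _) _ _
      have t11 : Sm (pdx (pdx q)) := (sq.dop _).dop _
      have t12 : Sm (pdx (pdy q)) := (sq.dop _).dop _
      have t22 : Sm (pdy (pdy q)) := (sq.dop _).dop _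
      have y3 : ∀ w, dop w (dop (k, m) (dop (k, m) q)) 0 =
          k * (k * dop w (pdx (pdx q)) 0 + m * dop w (pdx (pdy q)) 0) +
          m * (k * dop w (pdx (pdy q)) 0 + m * dop w (pdy (pdy q)) 0) := by
        intro w
        have i1 : Sm (fun p => k * pdx (pdx q) p) := contDiff_const.mul t11
        have i2 : Sm (fun p => m * pdx (pdy q) p) := contDiff_const.mul t12
        have i3 : Sm (fun p => k * pdx (pdy q) p) := contDiff_const.mul t12
        have i4 : Sm (fun p => m * pdy (pdy q) p) := contDiff_const.mul t22
        rw [y2, dop_add (contDiff_const.mul (i1.add i2)) (contDiff_const.mul (i3.add i4)),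
          dop_cmul k (i1.add i2), dop_cmul m (i3.add i4), dop_add i1 i2, dop_add i3 i4,
          dop_cmul k t11, dop_cmul m t12, dop_cmul k t12, dop_cmul m t22]
      rw [y3, dop_split, dop_split, dop_split, c2, c3, ← ha, ← hb, ← hc0, ← hd', hm, hκ]
      simp only
      ring
    · rw [hα]; ring
    · simp only [pdx, pdy]
      rw [third]
      simp only [ev, eh]
      rw [dop_split]
      change c * (k * c0 + m * d) = 2 * 0
      rw [hm]
      linear_combination c * k * mud
    · simp only [pdy]
      rw [third]
      simp only [ev]
      change c * d = 6 * 4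
      rw [hc]; field_simp; norm_num

lemma backward_dir {f η : ℝ × ℝ → ℝ × ℝ} (sf : SmM f) (hf0 : f 0 = 0) (hcr : CorankOne f)
    (hη0 : η 0 ≠ 0) (hker : fderiv ℝ f 0 (η 0) = 0) (hz : Zf 3 (jacDet f))
    (h3 : (dop (η 0))^[3] (jacDet f) 0 ≠ 0) :
    ∃ β α : ℝ, (β = 0 ∨ β = 1) ∧ JetEquiv 4 f (fun p => (p.1, quart β α p)) := by
  obtain ⟨A, B, sA, sB, A0, B0, dA, dB, hAv, hB1, hB2⟩ := linear_norm sf hf0 hcr hη0 hker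
  have sfA : SmM (fun p => f (A p)) := ContDiff.comp sf sA
  have sF : SmM (fun p => B (f (A p))) := ContDiff.comp sB sfA
  obtain ⟨φ, g, sφ, sg, φ0, g0, dφ, hφ⟩ := form_norm sF (by simp [A0, B0, hf0]) hB1 hB2
  have jφ : jacDet φ 0 ≠ 0 := by simp [jacDet, dφ]
  have sAφ : SmM (fun p => A (φ p)) := ContDiff.comp sA sφ
  have sfAφ : SmM (fun p => f (A (φ p))) := ContDiff.comp sf sAφ
  have eJ : (fun p => (jacDet B (f (A (φ p))) * jacDet (fun p => A (φ p)) p) *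
      jacDet f (A (φ p))) =ᶠ[𝓝 0] pdy g := by
    have := jacDet_congr hφ
    rw [jacDet_form sg] at this
    refine EventuallyEq.trans (Eventually.of_forall fun p => ?_) this
    simp only
    rw [jacDet_comp (g := fun p => f (A (φ p))) sB sfAφ, jacDet_comp (g := fun p => A (φ p)) sf sAφ]
    ring
  have su : Sm (fun p => jacDet B (f (A (φ p))) * jacDet (fun p => A (φ p)) p) :=
    ((Sm_jacDet sB).comp sfAφ).mul (Sm_jacDet sAφ)
  have sl : Sm (fun p => jacDet f (A (φ p))) := (Sm_jacDet sf).comp sAφ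
  have zl : Zf 3 (fun p => jacDet f (A (φ p))) :=
    Zf_comp (Sm_jacDet sf) sAφ (by simp [A0, φ0]) hz
  have zg : Zf 3 (pdy g) := Zf_congr eJ (Zf_mul_left su sl zl)
  have hdir : fderiv ℝ (fun p => A (φ p)) 0 (0, 1) = η 0 := by
    have e := fderiv_fun_comp (0 : ℝ × ℝ) (sA.diff (φ 0)) (sφ.diff 0)
    rw [e, φ0]
    simp [dφ, hAv]
  have hd : pdy (pdy (pdy (pdy g))) 0 ≠ 0 := by
    have e1 : (dop (0, 1))^[3] (pdy g) 0 = (dop (0, 1))^[3] (fun p => (jacDet B (f (A (φ p))) *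
        jacDet (fun p => A (φ p)) p) * jacDet f (A (φ p))) 0 := by
      refine iter_mod (sg.dop _) (su.mul sl) ?_ _
      refine Zf_congr (g := fun _ => 0) ?_ (Zf_zero_fun _)
      filter_upwards [eJ] with p hp
      rw [hp]; exact (sub_self (pdy g p)).symm
    rw [iter_mul su sl zl, iter_comp (φ := fun p => A (φ p)) (Sm_jacDet sf) sAφ
      (by simp [A0, φ0]) hz, hdir] at e1
    change (dop (0, 1))^[3] (pdy g) 0 ≠ 0
    rw [e1]
    refine mul_ne_zero ?_ h3
    rw [jacDet_comp sA sφ, φ0, A0, hf0]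
    exact mul_ne_zero dB (mul_ne_zero dA jφ)
  obtain ⟨k, m, c, β, α, hk, hc, hβ, hZ⟩ := scalar_norm sg zg hd
  refine ⟨β, α, hβ, ?_⟩
  have sS : SmM (fun p : ℝ × ℝ => (k * p.1, m * p.1 + 1 * p.2)) := by unfold SmM; fun_prop
  have sS0 : SmM (fun p : ℝ × ℝ => (k * (k⁻¹ * p.1), m * (k⁻¹ * p.1) + 0 * p.2)) := by
    unfold SmM; fun_prop
  have sN2 : Sm (fun p : ℝ × ℝ => c * (p.2 - g (k * (k⁻¹ * p.1), m * (k⁻¹ * p.1) + 0 * p.2))) :=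
    contDiff_const.mul (contDiff_snd.sub (sg.comp sS0))
  have sN : SmM (fun p : ℝ × ℝ => (k⁻¹ * p.1,
      c * (p.2 - g (k * (k⁻¹ * p.1), m * (k⁻¹ * p.1) + 0 * p.2)))) :=
    SmM_pair (contDiff_const.mul contDiff_fst) sN2
  set S : ℝ × ℝ → ℝ × ℝ := fun p => (k * p.1, m * p.1 + 1 * p.2) with hS
  set N : ℝ × ℝ → ℝ × ℝ := fun p => (k⁻¹ * p.1,
      c * (p.2 - g (k * (k⁻¹ * p.1), m * (k⁻¹ * p.1) + 0 * p.2))) with hN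
  have S0 : S 0 = 0 := by simp [hS]
  have g00 : g (0, 0) = 0 := g0
  have N0 : N 0 = 0 := by simp [hN, g00]
  have jS : jacDet S 0 ≠ 0 := by
    simp only [jacDet, hS, fderiv_smap]; simpa using hk
  have jN : jacDet N 0 ≠ 0 := by
    rw [jacDet_eq sN]
    simp only [hN]
    have sgS0 : Sm (fun p : ℝ × ℝ => g (k * (k⁻¹ * p.1), m * (k⁻¹ * p.1) + 0 * p.2)) := sg.comp sS0
    have sN3 : Sm (fun p : ℝ × ℝ => p.2 - g (k * (k⁻¹ * p.1), m * (k⁻¹ * p.1) + 0 * p.2)) :=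
      contDiff_snd.sub sgS0
    have sp1 : Sm (fun p : ℝ × ℝ => p.1) := contDiff_fst
    have sp2 : Sm (fun p : ℝ × ℝ => p.2) := contDiff_snd
    rw [dop_cmul _ sp1, dop_cmul _ sp1, dop_cmul c sN3, dop_cmul c sN3, dop_sub sp2 sgS0]
    simp only
    rw [dop_p1, dop_p2, dop_p1]
    have e : dop (0, 1) (fun p : ℝ × ℝ => g (k * (k⁻¹ * p.1), m * (k⁻¹ * p.1) + 0 * p.2)) 0 = 0 := by
      rw [dop_comp sg sS0]
      have : (fun p : ℝ × ℝ => (k * (k⁻¹ * p.1), m * (k⁻¹ * p.1) + 0 * p.2)) =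
        fun p : ℝ × ℝ => ((k * k⁻¹) * p.1, (m * k⁻¹) * p.1 + 0 * p.2) := by
        funext p; ext <;> simp only <;> ring
      rw [this, fderiv_smap]; simp [Prod.mk_zero_zero]
    rw [e]
    simp [hk, hc]
  have sφS : SmM (fun p => φ (S p)) := ContDiff.comp sφ sS
  have sΦ : SmM (fun p => A (φ (S p))) := ContDiff.comp sA sφS
  have sΨ : SmM (fun p => N (B p)) := ContDiff.comp sN sB
  have sAll : SmM ((fun p => N (B p)) ∘ f ∘ fun p => A (φ (S p))) :=
    ContDiff.comp sΨ (ContDiff.comp sf sΦ)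
  refine ⟨fun p => A (φ (S p)), fun p => N (B p), sΦ, sΨ, by simp only [S0, φ0, A0],
    by simp only [B0, N0], ?_, ?_, ?_⟩
  · rw [bij_fderiv_iff, jacDet_comp (g := fun p => φ (S p)) sA sφS, jacDet_comp sφ sS, S0, φ0]
    exact mul_ne_zero dA (mul_ne_zero jφ jS)
  · rw [bij_fderiv_iff, jacDet_comp sN sB, B0]
    exact mul_ne_zero jN dB
  · have eAll : ((fun p => N (B p)) ∘ f ∘ fun p => A (φ (S p))) =ᶠ[𝓝 0] fun p =>
        (p.1, c * (g (k * p.1, m * p.1 + 1 * p.2) - g (k * p.1, m * p.1 + 0 * p.2))) := by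
      have ht : Tendsto S (𝓝 0) (𝓝 0) := by
        have := (ContDiff.continuous sS).tendsto (0 : ℝ × ℝ)
        rwa [S0] at this
      filter_upwards [ht.eventually hφ] with p hp
      simp only [Function.comp_apply]
      rw [hp]
      have hk1 : k⁻¹ * (k * p.1) = p.1 := by field_simp
      simp only [hN, hS, hk1]
      simp
    rw [jet_iff sAll (SmM_pair contDiff_fst (Sm_quart _ _))]
    constructor
    · refine Zf_congr (g := fun _ => 0) ?_ (Zf_zero_fun _)
      filter_upwards [eAll] with p hp
      rw [hp]; simp
    · refine Zf_congr ?_ hZ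
      filter_upwards [eAll] with p hp
      rw [hp]

theorem stmt19 (f η : ℝ × ℝ → ℝ × ℝ)
    (hf : ContDiff ℝ (⊤ : ℕ∞) f) (hf0 : f 0 = 0) (hcr : CorankOne f)
    (hη : IsNullVF f η) :
    ((∃ α : ℝ, JetEquiv 4 f
        (fun p => (p.1, p.1 ^ 3 * p.2 + α * p.1 ^ 2 * p.2 ^ 2 + p.2 ^ 4))) ∨
      (∃ α : ℝ, JetEquiv 4 f
        (fun p => (p.1, α * p.1 ^ 2 * p.2 ^ 2 + p.2 ^ 4)))) ↔
      (fderiv ℝ (jacDet f) 0 = 0 ∧ hess (jacDet f) = 0 ∧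
        etaIter η 3 (jacDet f) 0 ≠ 0) := by
  obtain ⟨hη0, U, hU, hηU, hnull⟩ := hη
  have hj0 := corank_jacDet hcr
  have hker : fderiv ℝ f 0 (η 0) = 0 := hnull 0 (mem_of_mem_nhds hU) hj0
  obtain ⟨ξ, sξ, hξ⟩ := exists_global hU hηU
  have ξ0 : ξ 0 = η 0 := hξ.eq_of_nhds
  have sJ : Sm (jacDet f) := Sm_jacDet hf
  have eta : Zf 3 (jacDet f) → etaIter η 3 (jacDet f) 0 = (dop (η 0))^[3] (jacDet f) 0 := by
    intro hz
    rw [← (etaIter_congr hξ 3 (jacDet f)).eq_of_nhds, etaIter_eq_iterate, etaD_iter_eq sξ sJ hz, ξ0]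
  have q1 : ∀ α : ℝ, (fun p : ℝ × ℝ => (p.1, p.1 ^ 3 * p.2 + α * p.1 ^ 2 * p.2 ^ 2 + p.2 ^ 4)) =
      fun p => (p.1, quart 1 α p) := by
    intro α; funext p; simp [quart]
  have q0 : ∀ α : ℝ, (fun p : ℝ × ℝ => (p.1, α * p.1 ^ 2 * p.2 ^ 2 + p.2 ^ 4)) =
      fun p => (p.1, quart 0 α p) := by
    intro α; funext p; simp [quart]
  simp only [q1, q0]
  constructor
  · intro H
    have hh : Zf 3 (jacDet f) ∧ (dop (η 0))^[3] (jacDet f) 0 ≠ 0 := by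
      rcases H with ⟨α, H⟩ | ⟨α, H⟩
      · exact forward_dir hf hf0 hcr hη0 hker H
      · exact forward_dir hf hf0 hcr hη0 hker H
    obtain ⟨h1, h2⟩ := (Zf_three_iff sJ hj0).1 hh.1
    exact ⟨h1, h2, by rw [eta hh.1]; exact hh.2⟩
  · rintro ⟨h1, h2, h3⟩
    have hz := (Zf_three_iff sJ hj0).2 ⟨h1, h2⟩
    rw [eta hz] at h3
    obtain ⟨β, α, hβ, H⟩ := backward_dir hf hf0 hcr hη0 hker hz h3
    rcases hβ with rfl | rfl
    · exact Or.inr ⟨α, H⟩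
    · exact Or.inl ⟨α, H⟩
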